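/- The upper Pólya density equals the Beurling–Malliavin density restricted to substantial sequences with limsup of endpoint ratios strictly greater than 1: p̄(Λ) = b_{(1,+∞]}(Λ). -/

import Mathlib

open Filter Topology

/-- The counting function of the sequence `Λ`: `F_Λ(t) = #{k : Λ k ≤ t}` for `t > 0`
and `0` otherwise. -/
noncomputable def countFn (Λ : ℕ → ℝ) (t : ℝ) : ℝ :=
  if 0 < t then (Nat.card {k : ℕ | Λ k ≤ t} : ℝ) else 0

/-- A sequence of intervals `((a n, b n])_n` with `0 < a n < b n ≤ a (n+1)` is
*substantial* if `Σ (b n / a n - 1)² = ∞`. -/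
def IsSubstantial (a b : ℕ → ℝ) : Prop :=
  (∀ n, 0 < a n ∧ a n < b n ∧ b n ≤ a (n + 1)) ∧
    ¬ Summable (fun n => (b n / a n - 1) ^ 2)

/-- `limsup_n b n / a n`, taken in the extended reals. -/
noncomputable def ratioLimsup (a b : ℕ → ℝ) : EReal :=
  Filter.limsup (fun n => ((b n / a n : ℝ) : EReal)) Filter.atTop

/-- `ℓ_I = liminf_n (F_Λ(b n) - F_Λ(a n)) / (b n - a n)`, in the extended reals. -/
noncomputable def ellOf (Λ : ℕ → ℝ) (a b : ℕ → ℝ) : EReal :=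
  Filter.liminf
    (fun n => (((countFn Λ (b n) - countFn Λ (a n)) / (b n - a n) : ℝ) : EReal))
    Filter.atTop

/-- The set `𝔯_A` of admissible rates `R ≥ 0`. -/
def RSet (Λ : ℕ → ℝ) (A : Set EReal) : Set ℝ :=
  {R | 0 ≤ R ∧ ∃ a b : ℕ → ℝ, IsSubstantial a b ∧ ratioLimsup a b ∈ A ∧
    ∀ᶠ n in Filter.atTop, R ≤ (countFn Λ (b n) - countFn Λ (a n)) / (b n - a n)}

/-- The (restricted) Beurling–Malliavin density `b_A(Λ) = sup 𝔯_A`. -/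
noncomputable def bmDensity (Λ : ℕ → ℝ) (A : Set EReal) : EReal :=
  sSup ((fun r : ℝ => (r : EReal)) '' RSet Λ A)

/-- `limsup_{x → ∞} (F_Λ(x) - F_Λ(ξ x)) / (x - ξ x)`, in the extended reals. -/
noncomputable def polyaLimsup (Λ : ℕ → ℝ) (ξ : ℝ) : EReal :=
  Filter.limsup
    (fun x : ℝ => (((countFn Λ x - countFn Λ (ξ * x)) / (x - ξ * x) : ℝ) : EReal))
    Filter.atTop

lemma countFn_mono (Λ : ℕ → ℝ) (htend : Tendsto Λ atTop atTop) : Monotone (countFn Λ) := by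
  intro s t hst
  unfold countFn
  by_cases hs : 0 < s
  · rw [if_pos hs, if_pos (lt_of_lt_of_le hs hst)]
    have hfin : {k : ℕ | Λ k ≤ t}.Finite := by
      obtain ⟨N, hN⟩ := eventually_atTop.1 (htend.eventually_gt_atTop t)
      refine (Set.finite_lt_nat N).subset ?_
      intro k hk
      by_contra h
      exact absurd (hN k (not_lt.1 h)) (not_lt.2 hk)
    exact_mod_cast Nat.card_mono hfin (fun k (hk : Λ k ≤ s) => hk.trans hst)
  · rw [if_neg hs]
    split_ifs <;> positivity

lemma step_bound (F : ℝ → ℝ) (hF : Monotone F) (ξ R a : ℝ) (hξ0 : 0 < ξ) (hξ1 : ξ < 1)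
    (hR : 0 ≤ R) (ha : 0 < a) (h : ∀ x, a ≤ x → F x - F (ξ * x) ≤ R * (x - ξ * x)) :
    ∀ k : ℕ, ∀ b, a ≤ b → ξ ^ k * b ≤ a → F b - F a ≤ R * (b - ξ * a) := by
  intro k
  induction k with
  | zero =>
    intro b hab hk
    have : b = a := le_antisymm (by simpa using hk) hab
    subst this
    have : 0 ≤ R * (b - ξ * b) := mul_nonneg hR (by nlinarith)
    linarith
  | succ k ih =>
    intro b hab hk
    have h1 := h b hab
    by_cases hc : a ≤ ξ * b
    · have h2 := ih (ξ * b) hc (by rw [← mul_assoc, ← pow_succ]; exact hk)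
      nlinarith
    · have h2 := hF (not_le.1 hc).le
      have h3 : R * (b - ξ * b) ≤ R * (b - ξ * a) := by gcongr
      linarith

lemma a_tendsto (a b : ℕ → ℝ) (h : ∀ n, 0 < a n ∧ a n < b n ∧ b n ≤ a (n + 1)) (c : ℝ)
    (hc : 1 < c) (hf : ∃ᶠ n in atTop, c < b n / a n) : Tendsto a atTop atTop := by
  have hm : Monotone a := monotone_nat_of_le_succ fun n => ((h n).2.1.trans_le (h n).2.2).le
  rcases tendsto_atTop_of_monotone hm with h1 | ⟨l, hl⟩
  · exact h1
  · exfalso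
    have hl0 : 0 < l := (h 0).1.trans_le (hm.ge_of_tendsto hl 0)
    have h2 : Tendsto (fun n => a (n + 1) / a n) atTop (𝓝 (l / l)) :=
      ((tendsto_add_atTop_iff_nat 1).2 hl).div hl hl0.ne'
    rw [div_self hl0.ne'] at h2
    obtain ⟨n, hn1, hn2⟩ := (hf.and_eventually (h2.eventually_lt_const hc)).exists
    have : b n / a n ≤ a (n + 1) / a n := div_le_div_of_nonneg_right (h n).2.2 (h n).1.le
    linarith

lemma part_one (Λ : ℕ → ℝ) (ξ R : ℝ) (hR : 0 ≤ R) (hξ0 : 0 < ξ) (hξ1 : ξ < 1)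
    (hf : ∃ᶠ x in (atTop : Filter ℝ), R ≤ (countFn Λ x - countFn Λ (ξ * x)) / (x - ξ * x)) :
    R ∈ RSet Λ (Set.Ioi (1 : EReal)) := by
  have hex : ∀ y : ℝ, ∃ x, y ≤ x ∧ R ≤ (countFn Λ x - countFn Λ (ξ * x)) / (x - ξ * x) := by
    intro y
    obtain ⟨x, hx, hx2⟩ := (hf.and_eventually (eventually_ge_atTop y)).exists
    exact ⟨x, hx2, hx⟩
  choose g hg1 hg2 using hex
  let x : ℕ → ℝ := fun n => Nat.rec (g 1) (fun _ y => g (y / ξ)) n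
  have hx0 : x 0 = g 1 := rfl
  have hxs : ∀ n, x (n + 1) = g (x n / ξ) := fun n => rfl
  have hpos : ∀ n, 0 < x n := by
    intro n
    induction n with
    | zero => rw [hx0]; linarith [hg1 1]
    | succ n ih => rw [hxs]; exact (div_pos ih hξ0).trans_le (hg1 _)
  have hstep : ∀ n, x n ≤ ξ * x (n + 1) := by
    intro n
    have := hg1 (x n / ξ)
    rw [div_le_iff₀ hξ0, ← hxs] at this
    linarith
  have hD : ∀ n, R ≤ (countFn Λ (x n) - countFn Λ (ξ * x n)) / (x n - ξ * x n) := by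
    intro n
    cases n with
    | zero => exact hg2 _
    | succ n => exact hg2 _
  have hratio : ∀ n, x n / (ξ * x n) = 1 / ξ := by
    intro n
    have := (hpos n).ne'
    field_simp
  have h1 : 1 < 1 / ξ := by rw [lt_div_iff₀ hξ0]; linarith
  refine ⟨hR, fun n => ξ * x n, x, ⟨fun n => ⟨mul_pos hξ0 (hpos n), ?_, hstep n⟩, ?_⟩, ?_,
    Eventually.of_forall hD⟩
  · nlinarith [hpos n]
  · simp only [hratio]
    rw [summable_const_iff]
    have : 0 < (1 / ξ - 1) ^ 2 := pow_pos (by linarith) 2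
    exact this.ne'
  · unfold ratioLimsup
    simp only [hratio, limsup_const]
    rw [Set.mem_Ioi]
    exact_mod_cast h1

lemma part_two (Λ : ℕ → ℝ) (hF : Monotone (countFn Λ)) (R R' : ℝ) (hRR : R' < R)
    (hR : R ∈ RSet Λ (Set.Ioi (1 : EReal))) :
    ∀ᶠ ξ in 𝓝[Set.Ioo (0 : ℝ) 1] (1 : ℝ), (R' : EReal) ≤ polyaLimsup Λ ξ := by
  obtain ⟨-, a, b, ⟨hab, -⟩, hlim, hD⟩ := hR
  obtain ⟨c, hc1, hc2⟩ := EReal.lt_iff_exists_real_btwn.1 (Set.mem_Ioi.1 hlim)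
  have hc1 : 1 < c := by exact_mod_cast hc1
  have hfreq : ∃ᶠ n in atTop, c < b n / a n := by
    have := frequently_lt_of_lt_limsup (by isBoundedDefault) hc2
    exact this.mono fun n hn => by exact_mod_cast hn
  have hat := a_tendsto a b hab c hc1 hfreq
  have hev : ∀ᶠ ξ in 𝓝[Set.Ioo (0 : ℝ) 1] (1 : ℝ), R' * (1 - ξ) < (R - R') * (c - 1) := by
    have h1 : Tendsto (fun ξ : ℝ => R' * (1 - ξ)) (𝓝 1) (𝓝 (R' * (1 - 1))) :=
      Continuous.tendsto (by fun_prop) 1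
    refine (h1.mono_left nhdsWithin_le_nhds).eventually_lt_const ?_
    have : 0 < (R - R') * (c - 1) := mul_pos (by linarith) (by linarith)
    simpa using this
  filter_upwards [hev, self_mem_nhdsWithin] with ξ h1 hξ
  obtain ⟨hξ0, hξ1⟩ := hξ
  by_contra hlt
  have hlt2 := eventually_lt_of_limsup_lt (not_le.1 hlt) (by isBoundedDefault)
  obtain ⟨X, hX⟩ := eventually_atTop.1 hlt2
  obtain ⟨n, ⟨hn1, hn2⟩, hn3⟩ := ((hfreq.and_eventually hD).and_eventually
    (hat.eventually_ge_atTop X)).exists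
  obtain ⟨ha, hb, -⟩ := hab n
  have key : ∀ x, a n ≤ x → countFn Λ x - countFn Λ (ξ * x) < R' * (x - ξ * x) := by
    intro x hx
    have h2 := hX x (hn3.trans hx)
    have h2 : (countFn Λ x - countFn Λ (ξ * x)) / (x - ξ * x) < R' := by exact_mod_cast h2
    rwa [div_lt_iff₀ (by nlinarith)] at h2
  have hR' : 0 ≤ R' := by
    have h2 := key (a n) le_rfl
    have h3 : countFn Λ (ξ * a n) ≤ countFn Λ (a n) := hF (by nlinarith)
    by_contra h
    have : 0 < a n - ξ * a n := by nlinarith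
    nlinarith
  obtain ⟨k, hk⟩ := exists_pow_lt_of_lt_one (div_pos ha (ha.trans hb)) hξ1
  rw [lt_div_iff₀ (ha.trans hb)] at hk
  have h4 := step_bound _ hF ξ R' (a n) hξ0 hξ1 hR' ha (fun x hx => (key x hx).le) k (b n)
    hb.le hk.le
  rw [le_div_iff₀ (by linarith)] at hn2
  rw [lt_div_iff₀ ha] at hn1
  have h5 : R * (b n - a n) ≤ R' * (b n - ξ * a n) := hn2.trans h4
  have h6 : (R - R') * ((c - 1) * a n) ≤ (R - R') * (b n - a n) := by
    apply mul_le_mul_of_nonneg_left <;> linarith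
  have h7 := mul_lt_mul_of_pos_right h1 ha
  nlinarith

theorem stmt_8 (Λ : ℕ → ℝ) (hmono : StrictMono Λ) (h0 : 0 ≤ Λ 0)
    (htend : Filter.Tendsto Λ Filter.atTop Filter.atTop) (p : EReal)
    (hp : Filter.Tendsto (fun ξ : ℝ => polyaLimsup Λ ξ)
      (nhdsWithin (1 : ℝ) (Set.Ioo (0 : ℝ) 1)) (nhds p)) :
    p = bmDensity Λ (Set.Ioi (1 : EReal)) := by
  have hF := countFn_mono Λ htend
  have hne : (𝓝[Set.Ioo (0 : ℝ) 1] (1 : ℝ)).NeBot := by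
    rw [nhdsWithin_Ioo_eq_nhdsLT (by norm_num)]
    infer_instance
  apply le_antisymm
  · apply EReal.ge_of_forall_gt_iff_ge.1
    intro R hR
    have hmem : max R 0 ∈ RSet Λ (Set.Ioi (1 : EReal)) := by
      rcases le_or_gt R 0 with h | h
      · rw [max_eq_right h]
        refine part_one Λ (1 / 2) 0 le_rfl (by norm_num) (by norm_num) ?_
        refine Eventually.frequently ?_
        filter_upwards [eventually_gt_atTop 0] with x hx
        have : countFn Λ (1 / 2 * x) ≤ countFn Λ x := hF (by linarith)
        exact div_nonneg (by linarith) (by linarith)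
      · rw [max_eq_left h.le]
        obtain ⟨ξ, hξ1, hξ2⟩ := ((hp.eventually_const_lt hR).and self_mem_nhdsWithin).exists
        refine part_one Λ ξ R h.le hξ2.1 hξ2.2 ?_
        have := frequently_lt_of_lt_limsup (by isBoundedDefault) hξ1
        exact this.mono fun x hx => by
          have := EReal.coe_lt_coe_iff.1 hx
          exact this.le
    calc (R : EReal) ≤ ((max R 0 : ℝ) : EReal) := by exact_mod_cast le_max_left R 0
      _ ≤ bmDensity Λ (Set.Ioi (1 : EReal)) := le_sSup ⟨_, hmem, rfl⟩
  · apply sSup_le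
    rintro _ ⟨R, hR, rfl⟩
    apply EReal.ge_of_forall_gt_iff_ge.1
    intro R' hR'
    have hR' : R' < R := EReal.coe_lt_coe_iff.1 hR'
    exact ge_of_tendsto hp (part_two Λ hF R R' hR' hR)
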